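/- arXiv:1403.7498 — 5 statements merged into one kernel-verified Lean document; each statement's English description precedes it below -/
import Mathlib

section
/- For every pair (α,β) of deterministic strategies of the two players, there exists a unique (up to almost-everywhere equality) pair of controls (u,v) ∈ 𝒰(t₀)×𝒱(t₀) such that α(v) = u almost everywhere on [t₀,1] and β(u) = v almost everywhere on [t₀,1]. -/
open MeasureTheory

/-- A deterministic strategy, for the player who observes the opponent's controls
(Lebesgue-measurable maps `[t₀,1] → A`) and answers with controls with values in `B`.
It comes with a finite partition `t₀ = s 0 < s 1 < ⋯ < s N = 1` such that if two
controls of the opponent agree a.e. on `[s 0, s m]`, then the answers agree a.e. on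
`[s 0, s (m+1)]`.  Controls are identified up to a.e. equality on `[t₀,1]`, and a
strategy maps (classes of) measurable controls to (classes of) measurable controls. -/
structure DetStrategy (t₀ : ℝ) (A B : Type*) [MeasurableSpace A] [MeasurableSpace B] where
  toFun : (ℝ → A) → (ℝ → B)
  maps_controls : ∀ v : ℝ → A, Measurable v → Measurable (toFun v)
  N : ℕ
  Npos : 0 < N
  s : ℕ → ℝ
  s_zero : s 0 = t₀
  s_last : s N = 1
  s_mono : ∀ m < N, s m < s (m + 1)
  nonanticipative : ∀ m < N, ∀ v₁ v₂ : ℝ → A,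
    (v₁ =ᵐ[volume.restrict (Set.Icc t₀ (s m))] v₂) →
    (toFun v₁ =ᵐ[volume.restrict (Set.Icc t₀ (s (m + 1)))] toFun v₂)

/-!
If `β` answers with delay along its partition `s`, then so does `α ∘ β`, because `α` is causal:
agreement of two controls up to time `s m` becomes agreement of their images up to `s (m + 1)`.
The `N`-th iterate of `α ∘ β` therefore forgets its starting point, so it sends any control to a
fixed point, and two fixed points agree interval by interval.
-/

section Causality

variable {X A B C : Type*}

/-- Causality, without delay, of a map on controls: outputs agree along `l` as soon as inputs do.
The filter `l` encodes the past, e.g. the a.e. filter of `[t₀, t]`. -/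
def IsCausalAt (l : Filter X) (F : (X → A) → X → B) : Prop :=
  ∀ ⦃v₁ v₂ : X → A⦄, v₁ =ᶠ[l] v₂ → F v₁ =ᶠ[l] F v₂

/-- Nonanticipativity with delay along successive pasts `l 0, …, l N`: agreement of inputs along
`l m` forces agreement of outputs along `l (m + 1)`. The filters `l m` with `m > N` are ignored. -/
def IsDelayedAlong (l : ℕ → Filter X) (N : ℕ) (F : (X → A) → X → B) : Prop :=
  ∀ m < N, ∀ ⦃v₁ v₂ : X → A⦄, v₁ =ᶠ[l m] v₂ → F v₁ =ᶠ[l (m + 1)] F v₂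

theorem isCausalAt_bot (F : (X → A) → X → B) : IsCausalAt ⊥ F :=
  fun _ _ _ => Filter.eventually_bot

namespace IsDelayedAlong

variable {l : ℕ → Filter X} {N : ℕ}

theorem isCausalAt {F : (X → A) → X → B} (hF : IsDelayedAlong l N F) {m : ℕ} (hm : m < N)
    {k : Filter X} (hmk : l m ≤ k) (hkm : k ≤ l (m + 1)) : IsCausalAt k F :=
  fun _ _ h => (hF m hm (h.filter_mono hmk)).filter_mono hkm

theorem isCausalAt_last {F : (X → A) → X → B} (hF : IsDelayedAlong l N F) (hl₀ : l 0 = ⊥)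
    (hl : ∀ m ≤ N, l m ≤ l N) : IsCausalAt (l N) F := by
  cases N with
  | zero => exact hl₀ ▸ isCausalAt_bot F
  | succ m => exact hF.isCausalAt m.lt_succ_self (hl m m.le_succ) le_rfl

theorem comp {F : (X → B) → X → C} {G : (X → A) → X → B} (hG : IsDelayedAlong l N G)
    (hF : ∀ m ≤ N, IsCausalAt (l m) F) : IsDelayedAlong l N (F ∘ G) :=
  fun m hm _ _ h => hF (m + 1) hm (hG m hm h)

variable {F : (X → A) → X → A}

theorem iterate_eventuallyEq (hF : IsDelayedAlong l N F) (hl₀ : l 0 = ⊥) {m : ℕ} (hm : m ≤ N)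
    (u₁ u₂ : X → A) : F^[m] u₁ =ᶠ[l m] F^[m] u₂ := by
  induction m with
  | zero => exact hl₀ ▸ Filter.eventually_bot
  | succ m ih =>
    simp only [Function.iterate_succ_apply']
    exact hF m hm (ih (Nat.le_of_succ_le hm))

theorem map_iterate_eventuallyEq (hF : IsDelayedAlong l N F) (hl₀ : l 0 = ⊥) (u : X → A) :
    F (F^[N] u) =ᶠ[l N] F^[N] u := by
  rw [← Function.iterate_succ_apply' F, Function.iterate_succ_apply]
  exact hF.iterate_eventuallyEq hl₀ le_rfl (F u) u

theorem eventuallyEq_of_map_eventuallyEq (hF : IsDelayedAlong l N F) (hl₀ : l 0 = ⊥)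
    (hl : ∀ m ≤ N, l m ≤ l N) {u₁ u₂ : X → A} (h₁ : F u₁ =ᶠ[l N] u₁) (h₂ : F u₂ =ᶠ[l N] u₂) :
    u₁ =ᶠ[l N] u₂ := by
  suffices agree : ∀ m ≤ N, u₁ =ᶠ[l m] u₂ from agree N le_rfl
  intro m hm
  induction m with
  | zero => exact hl₀ ▸ Filter.eventually_bot
  | succ m ih =>
    calc u₁ =ᶠ[l (m + 1)] F u₁ := (h₁.filter_mono (hl _ hm)).symm
      _ =ᶠ[l (m + 1)] F u₂ := hF m hm (ih (Nat.le_of_succ_le hm))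
      _ =ᶠ[l (m + 1)] u₂ := h₂.filter_mono (hl _ hm)

end IsDelayedAlong

end Causality

theorem deterministic_strategies_fixed_point_general
    {X U V : Type*} [MeasurableSpace X] [MeasurableSpace U] [MeasurableSpace V] [Nonempty U]
    {l : ℕ → Filter X} {N : ℕ} (hl₀ : l 0 = ⊥) (hl : ∀ m ≤ N, l m ≤ l N)
    {F : (X → V) → X → U} {G : (X → U) → X → V}
    (hF_meas : ∀ v, Measurable v → Measurable (F v))
    (hG_meas : ∀ u, Measurable u → Measurable (G u))
    (hF : ∀ m ≤ N, IsCausalAt (l m) F) (hG : IsDelayedAlong l N G) :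
    ∃ (u : X → U) (v : X → V),
      (Measurable u ∧ Measurable v ∧ F v =ᶠ[l N] u ∧ G u =ᶠ[l N] v) ∧
      ∀ (u' : X → U) (v' : X → V), F v' =ᶠ[l N] u' → G u' =ᶠ[l N] v' →
        u =ᶠ[l N] u' ∧ v =ᶠ[l N] v' := by
  obtain ⟨a⟩ := ‹Nonempty U›
  have hFG : IsDelayedAlong l N (F ∘ G) := hG.comp hF
  let u : X → U := (F ∘ G)^[N] fun _ => a
  have hu_meas : Measurable u :=
    Function.Iterate.rec (fun w : X → U => Measurable w) measurable_const
      (fun w hw => hF_meas _ (hG_meas w hw)) N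
  have hu : F (G u) =ᶠ[l N] u := hFG.map_iterate_eventuallyEq hl₀ _
  refine ⟨u, G u, ⟨hu_meas, hG_meas u hu_meas, hu, .rfl⟩, fun u' v' hFv' hGu' => ?_⟩
  have hu' : F (G u') =ᶠ[l N] u' := (hF N le_rfl hGu').trans hFv'
  have huu' : u =ᶠ[l N] u' := hFG.eventuallyEq_of_map_eventuallyEq hl₀ hl hu hu'
  exact ⟨huu', (hG.isCausalAt_last hl₀ hl huu').trans hGu'⟩

theorem ae_restrict_Icc_eq_bot {X : Type*} [PartialOrder X] [MeasurableSpace X] (μ : Measure X)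
    [NullSingletonClass μ] {a b : X} (hba : b ≤ a) : ae (μ.restrict (Set.Icc a b)) = ⊥ := by
  rw [ae_eq_bot, Measure.restrict_eq_zero]
  exact (Set.subsingleton_Icc_of_ge hba).measure_zero μ

theorem ae_restrict_Icc_mono_right {X : Type*} [Preorder X] [MeasurableSpace X] (μ : Measure X)
    (a : X) : Monotone fun b => ae (μ.restrict (Set.Icc a b)) :=
  fun _ _ hbc => ae_mono (Measure.restrict_mono_set μ (Set.Icc_subset_Icc_right hbc))

theorem exists_lt_and_le_succ {R : Type*} [LinearOrder R] {f : ℕ → R} {t : R} {N : ℕ}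
    (h₀ : f 0 < t) (hN : t ≤ f N) : ∃ m < N, f m < t ∧ t ≤ f (m + 1) := by
  induction N with
  | zero => exact absurd hN h₀.not_ge
  | succ n ih =>
    rcases lt_or_ge (f n) t with hlt | hle
    · exact ⟨n, n.lt_succ_self, hlt, hN⟩
    · obtain ⟨m, hm, hmt⟩ := ih hle
      exact ⟨m, hm.trans n.lt_succ_self, hmt⟩

namespace DetStrategy

variable {t₀ : ℝ} {A B : Type*} [MeasurableSpace A] [MeasurableSpace B] (α : DetStrategy t₀ A B)

/-- The past of the `m`-th partition point: the a.e. filter of `[t₀, s m]`. -/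
noncomputable def past (m : ℕ) : Filter ℝ :=
  ae (volume.restrict (Set.Icc t₀ (α.s m)))

theorem past_zero : α.past 0 = ⊥ :=
  ae_restrict_Icc_eq_bot volume α.s_zero.le

theorem past_last : α.past α.N = ae (volume.restrict (Set.Icc t₀ 1)) := by
  rw [past, α.s_last]

theorem s_le_one {m : ℕ} (hm : m ≤ α.N) : α.s m ≤ 1 := by
  induction hm using Nat.decreasingInduction with
  | self => exact α.s_last.le
  | of_succ m hm ih => exact (α.s_mono m hm).le.trans ih

theorem past_le_past_last {m : ℕ} (hm : m ≤ α.N) : α.past m ≤ α.past α.N :=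
  ae_restrict_Icc_mono_right volume t₀ ((α.s_le_one hm).trans_eq α.s_last.symm)

theorem isDelayedAlong_past : IsDelayedAlong α.past α.N α.toFun :=
  α.nonanticipative

theorem isCausalAt {t : ℝ} (ht : t ≤ 1) :
    IsCausalAt (ae (volume.restrict (Set.Icc t₀ t))) α.toFun := by
  rcases le_or_gt t t₀ with hle | hlt
  · exact ae_restrict_Icc_eq_bot volume hle ▸ isCausalAt_bot α.toFun
  · obtain ⟨m, hm, hmt, htm⟩ : ∃ m < α.N, α.s m < t ∧ t ≤ α.s (m + 1) :=
      exists_lt_and_le_succ (α.s_zero.trans_lt hlt) (ht.trans_eq α.s_last.symm)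
    exact α.isDelayedAlong_past.isCausalAt hm (ae_restrict_Icc_mono_right volume t₀ hmt.le)
      (ae_restrict_Icc_mono_right volume t₀ htm)

end DetStrategy

/-- For every pair `(α, β)` of deterministic strategies of the two players there is a
unique (up to a.e. equality on `[t₀,1]`) pair of controls `(u, v)` such that
`α v = u` a.e. on `[t₀,1]` and `β u = v` a.e. on `[t₀,1]`. -/
theorem deterministic_strategies_fixed_point
    {U V : Type*} [MeasurableSpace U] [MeasurableSpace V] [Nonempty U] [Nonempty V]
    {t₀ : ℝ} (ht₀ : t₀ ∈ Set.Ico (0 : ℝ) 1)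
    (α : DetStrategy t₀ V U) (β : DetStrategy t₀ U V) :
    ∃ (u : ℝ → U) (v : ℝ → V),
      (Measurable u ∧ Measurable v ∧
        α.toFun v =ᵐ[volume.restrict (Set.Icc t₀ 1)] u ∧
        β.toFun u =ᵐ[volume.restrict (Set.Icc t₀ 1)] v) ∧
      (∀ (u' : ℝ → U) (v' : ℝ → V), Measurable u' → Measurable v' →
        α.toFun v' =ᵐ[volume.restrict (Set.Icc t₀ 1)] u' →
        β.toFun u' =ᵐ[volume.restrict (Set.Icc t₀ 1)] v' →
        (u =ᵐ[volume.restrict (Set.Icc t₀ 1)] u' ∧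
         v =ᵐ[volume.restrict (Set.Icc t₀ 1)] v')) := by
  obtain ⟨u, v, huv, huniq⟩ := deterministic_strategies_fixed_point_general β.past_zero
    (fun _ => β.past_le_past_last) α.maps_controls β.maps_controls
    (fun _ hm => α.isCausalAt (β.s_le_one hm)) β.isDelayedAlong_past
  rw [β.past_last] at huv huniq
  exact ⟨u, v, huv, fun u' v' _ _ => huniq u' v'⟩
end

section
/- For every pair (α,β) of random strategies of the two players and every ω = (ω₁,ω₂) ∈ Ω_α × Ω_β, there exists a unique (up to a.e. equality) pair of controls (u_ω, v_ω) ∈ 𝒰(t₀)×𝒱(t₀) such that α(ω₁, v_ω) = u_ω and β(ω₂, u_ω) = v_ω almost everywhere on [t₀,1]. Moreover, the map ρ : Ω_α × Ω_β → 𝒰(t₀)×𝒱(t₀), ω ↦ (u_ω, v_ω), is measurable with respect to the product σ-field ℱ_α ⊗ ℱ_β on the domain and the Borel σ-field of the L¹ topology on the codomain. -/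
open MeasureTheory

/-- The set of controls with values in `U` on the interval `[t₀, 1]`:
Lebesgue-measurable maps `ℝ → U` (restricted to `[t₀,1]`). -/
def Control (t₀ : ℝ) (U : Type*) [MeasurableSpace U] : Type _ :=
  {u : ℝ → U // Measurable u}

/-- The `L¹` pseudodistance between two controls:
`d(u, u') = ∫_{t₀}^1 d_U (u t, u' t) dt`. -/
noncomputable def ctrlDist {t₀ : ℝ} {U : Type*} [MeasurableSpace U] [MetricSpace U]
    (u v : Control t₀ U) : ℝ :=
  ∫ t in Set.Icc t₀ 1, dist (u.1 t) (v.1 t)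

/-- The Borel σ-field of the topology of `L¹`-convergence on the set of controls.
Since `U` is a separable metric space, the `L¹` pseudometric topology on controls is
separable, so its Borel σ-field is generated by the open balls. -/
noncomputable instance ControlMeasurableSpace {t₀ : ℝ} {U : Type*} [MeasurableSpace U]
    [MetricSpace U] : MeasurableSpace (Control t₀ U) :=
  MeasurableSpace.generateFrom
    {S | ∃ (c : Control t₀ U) (r : ℝ), S = {u | ctrlDist c u < r}}

/-- A random strategy for the player who observes the opponent's controls (with values
in `A`) and answers with controls with values in `B`.  The underlying probability space
is `([0,1]^n, Borel, Lebesgue)` for some `n ≥ 1`, modelled on `Fin n → ℝ`;  the map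
`α : Ω × 𝒱(t₀) → 𝒰(t₀)` is measurable (controls carrying the Borel σ-field of the `L¹`
topology), and there is a finite partition `t₀ = s 0 < ⋯ < s N = 1` such that for every
`ω`, if two controls of the opponent agree a.e. on `[s 0, s m]` then the two answers
agree a.e. on `[s 0, s (m+1)]`. -/
structure RandStrategy (t₀ : ℝ) (A B : Type*)
    [MeasurableSpace A] [MetricSpace A] [MeasurableSpace B] [MetricSpace B] where
  n : ℕ
  npos : 0 < n
  toFun : (Fin n → ℝ) → Control t₀ A → Control t₀ B
  measurable_toFun : Measurable fun z : (Fin n → ℝ) × Control t₀ A => toFun z.1 z.2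
  N : ℕ
  Npos : 0 < N
  s : ℕ → ℝ
  s_zero : s 0 = t₀
  s_last : s N = 1
  s_mono : ∀ m < N, s m < s (m + 1)
  nonanticipative : ∀ m < N, ∀ ω : Fin n → ℝ, ∀ v₁ v₂ : Control t₀ A,
    (v₁.1 =ᵐ[volume.restrict (Set.Icc t₀ (s m))] v₂.1) →
    ((toFun ω v₁).1 =ᵐ[volume.restrict (Set.Icc t₀ (s (m + 1)))] (toFun ω v₂).1)

/-!
Composing the two strategies gives, for each `ω`, the self-map `Γ = α(ω₁, β(ω₂, ·))` of player 1's
controls. Along the partition of `α` alone, agreement of two controls up to `s m` is kept by `β`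
and improved by `α` to agreement up to `s (m + 1)`; no common refinement of the two partitions is
needed. Since any two controls agree up to `s 0 = t₀`, the iterate `Γ^[N]` is constant up to a.e.
equality, so its value is the unique fixed point of `Γ`. Being a finite iterate of jointly
measurable maps, it depends measurably on `ω`.
-/

section Iterate

variable {X : Type*} {f : X → X}

theorem rel_iterate_iterate_of_rel_succ {r : ℕ → X → X → Prop} {N : ℕ} (h_zero : ∀ x y, r 0 x y)
    (h_succ : ∀ m < N, ∀ x y, r m x y → r (m + 1) (f x) (f y)) (x y : X) :
    r N (f^[N] x) (f^[N] y) := by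
  suffices h : ∀ m ≤ N, r m (f^[m] x) (f^[m] y) from h N le_rfl
  intro m hm
  induction m with
  | zero => exact h_zero x y
  | succ m ih =>
    rw [Function.iterate_succ_apply', Function.iterate_succ_apply']
    exact h_succ m hm _ _ (ih (Nat.le_of_succ_le hm))

variable {r : X → X → Prop}

theorem rel_apply_iterate_iterate {n : ℕ} (h : ∀ x y, r (f^[n] x) (f^[n] y)) (x : X) :
    r (f (f^[n] x)) (f^[n] x) := by
  rw [← Function.iterate_succ_apply' f, Function.iterate_succ_apply]
  exact h (f x) x

theorem rel_iterate_self_of_rel_apply_self (hr : Equivalence r)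
    (hf : ∀ x y, r x y → r (f x) (f y)) {x : X} (hx : r (f x) x) (n : ℕ) : r (f^[n] x) x := by
  induction n with
  | zero => exact hr.refl x
  | succ n ih =>
    rw [Function.iterate_succ_apply']
    exact hr.trans (hf _ _ ih) hx

theorem measurable_iterate_of_measurable_uncurry {Ω Y : Type*} [MeasurableSpace Ω]
    [MeasurableSpace Y] {F : Ω → Y → Y} (hF : Measurable (Function.uncurry F)) (n : ℕ) (y : Y) :
    Measurable fun ω => (F ω)^[n] y := by
  induction n with
  | zero => exact measurable_const
  | succ n ih =>
    simp only [Function.iterate_succ_apply']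
    exact hF.comp (measurable_id.prodMk ih)

end Iterate

section Delay

variable {t₀ : ℝ} {A B C : Type*} [MeasurableSpace A] [MeasurableSpace B] [MeasurableSpace C]

/-- Two controls agree almost everywhere on `[t₀, τ]`, where the initial time `t₀` is read off
from the type of the controls. -/
def AgreeUntil (τ : ℝ) (u v : Control t₀ A) : Prop :=
  u.1 =ᵐ[volume.restrict (Set.Icc t₀ τ)] v.1

/-- A deterministic response to controls is nonanticipative if, for every `τ ≤ 1`, its answer up
to time `τ` depends only on the observed control up to time `τ`. -/
def IsNonanticipative (f : Control t₀ A → Control t₀ B) : Prop :=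
  ∀ τ ≤ 1, ∀ u v, AgreeUntil τ u v → AgreeUntil τ (f u) (f v)

/-- A deterministic response to controls has delay along `s 0, …, s N` if its answer up to time
`s (m + 1)` depends only on the observed control up to time `s m`. The values of `s` beyond `N`
are irrelevant. -/
def HasDelay (s : ℕ → ℝ) (N : ℕ) (f : Control t₀ A → Control t₀ B) : Prop :=
  ∀ m < N, ∀ u v, AgreeUntil (s m) u v → AgreeUntil (s (m + 1)) (f u) (f v)

theorem agreeUntil_equivalence (τ : ℝ) : Equivalence (AgreeUntil τ (t₀ := t₀) (A := A)) where
  refl _ := Filter.EventuallyEq.rfl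
  symm h := h.symm
  trans h₁ h₂ := h₁.trans h₂

theorem AgreeUntil.mono {σ τ : ℝ} {u v : Control t₀ A} (h : AgreeUntil τ u v) (hστ : σ ≤ τ) :
    AgreeUntil σ u v :=
  ae_restrict_of_ae_restrict_of_subset (Set.Icc_subset_Icc_right hστ) h

theorem agreeUntil_of_le {τ : ℝ} (hτ : τ ≤ t₀) (u v : Control t₀ A) : AgreeUntil τ u v := by
  have h_null : volume.restrict (Set.Icc t₀ τ) = 0 := by
    rw [Measure.restrict_eq_zero, Real.volume_Icc, ENNReal.ofReal_eq_zero]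
    exact sub_nonpos.2 hτ
  rw [AgreeUntil, h_null, ae_zero]
  exact Filter.eventually_bot

namespace HasDelay

variable {s : ℕ → ℝ} {N : ℕ}

theorem isNonanticipative {f : Control t₀ A → Control t₀ B} (hf : HasDelay s N f)
    (hs_zero : s 0 ≤ t₀) (hs_last : 1 ≤ s N) : IsNonanticipative f := by
  intro τ hτ u v huv
  suffices h : ∀ m ≤ N, AgreeUntil (min τ (s m)) (f u) (f v) from
    (h N le_rfl).mono (le_min le_rfl (hτ.trans hs_last))
  intro m hm
  induction m with
  | zero => exact agreeUntil_of_le ((min_le_right _ _).trans hs_zero) _ _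
  | succ m ih =>
    rcases le_total (s m) τ with h_le | h_le
    · exact (hf m hm u v (huv.mono h_le)).mono (min_le_right _ _)
    · exact (ih (Nat.le_of_succ_le hm)).mono
        (le_min (min_le_left _ _) ((min_le_left _ _).trans h_le))

theorem comp_isNonanticipative {g : Control t₀ B → Control t₀ C} {f : Control t₀ A → Control t₀ B}
    (hg : HasDelay s N g) (hf : IsNonanticipative f) (hs : ∀ m < N, s m ≤ 1) :
    HasDelay s N (g ∘ f) :=
  fun m hm u v huv => hg m hm _ _ (hf (s m) (hs m hm) u v huv)

theorem agreeUntil_iterate {f : Control t₀ A → Control t₀ A} (hf : HasDelay s N f)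
    (hs_zero : s 0 ≤ t₀) (u v : Control t₀ A) : AgreeUntil (s N) (f^[N] u) (f^[N] v) :=
  rel_iterate_iterate_of_rel_succ (r := fun m => AgreeUntil (s m)) (agreeUntil_of_le hs_zero) hf u v

end HasDelay

end Delay

namespace RandStrategy

variable {t₀ : ℝ} {A B : Type*} [MeasurableSpace A] [MetricSpace A] [MeasurableSpace B]
  [MetricSpace B] (α : RandStrategy t₀ A B)

theorem hasDelay (ω : Fin α.n → ℝ) : HasDelay α.s α.N (α.toFun ω) :=
  fun m hm => α.nonanticipative m hm ω

theorem isNonanticipative (ω : Fin α.n → ℝ) : IsNonanticipative (α.toFun ω) :=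
  (α.hasDelay ω).isNonanticipative α.s_zero.le α.s_last.ge

theorem monotoneOn_s : MonotoneOn α.s (Set.Iic α.N) :=
  (strictMonoOn_Iic_of_lt_succ α.s_mono).monotoneOn

end RandStrategy

section FixedPoint

variable {t₀ : ℝ} {U V : Type*} [MeasurableSpace U] [MeasurableSpace V] {s : ℕ → ℝ} {N : ℕ}

theorem agreeUntil_fixed_point_and_unique (hs : MonotoneOn s (Set.Iic N)) (hs_zero : s 0 = t₀)
    (hs_last : s N = 1) {a : Control t₀ V → Control t₀ U} {b : Control t₀ U → Control t₀ V}
    (ha : HasDelay s N a) (hb : IsNonanticipative b) (u₀ : Control t₀ U) :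
    AgreeUntil 1 (a (b ((a ∘ b)^[N] u₀))) ((a ∘ b)^[N] u₀) ∧
    ∀ u v, AgreeUntil 1 (a v) u → AgreeUntil 1 (b u) v →
      AgreeUntil 1 ((a ∘ b)^[N] u₀) u ∧ AgreeUntil 1 (b ((a ∘ b)^[N] u₀)) v := by
  have hs_le : ∀ m < N, s m ≤ 1 := fun m hm => hs_last ▸ hs hm.le Set.self_mem_Iic hm.le
  have h_delay : HasDelay s N (a ∘ b) := ha.comp_isNonanticipative hb hs_le
  have ha_congr := ha.isNonanticipative hs_zero.le hs_last.ge 1 le_rfl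
  have h_congr := h_delay.isNonanticipative hs_zero.le hs_last.ge 1 le_rfl
  have h_const : ∀ u v, AgreeUntil 1 ((a ∘ b)^[N] u) ((a ∘ b)^[N] v) :=
    hs_last ▸ h_delay.agreeUntil_iterate hs_zero.le
  refine ⟨rel_apply_iterate_iterate h_const u₀, fun u v hu hv => ?_⟩
  have h_fixed : AgreeUntil 1 ((a ∘ b) u) u := (ha_congr _ _ hv).trans hu
  have h_iterate : AgreeUntil 1 ((a ∘ b)^[N] u) u :=
    rel_iterate_self_of_rel_apply_self (agreeUntil_equivalence 1) h_congr h_fixed N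
  have h_unique := (h_const u₀ u).trans h_iterate
  exact ⟨h_unique, (hb 1 le_rfl _ _ h_unique).trans hv⟩

theorem random_strategies_fixed_point_general [Nonempty U] [MeasurableSpace (Control t₀ U)]
    [MeasurableSpace (Control t₀ V)] {Ω₁ Ω₂ : Type*} [MeasurableSpace Ω₁] [MeasurableSpace Ω₂]
    (hs : MonotoneOn s (Set.Iic N)) (hs_zero : s 0 = t₀) (hs_last : s N = 1)
    {α : Ω₁ → Control t₀ V → Control t₀ U} {β : Ω₂ → Control t₀ U → Control t₀ V}
    (hα_meas : Measurable (Function.uncurry α)) (hβ_meas : Measurable (Function.uncurry β))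
    (hα : ∀ ω, HasDelay s N (α ω)) (hβ : ∀ ω, IsNonanticipative (β ω)) :
    ∃ ρ : Ω₁ × Ω₂ → Control t₀ U × Control t₀ V, Measurable ρ ∧ ∀ ω,
      (AgreeUntil 1 (α ω.1 (ρ ω).2) (ρ ω).1 ∧ AgreeUntil 1 (β ω.2 (ρ ω).1) (ρ ω).2) ∧
      ∀ u v, AgreeUntil 1 (α ω.1 v) u → AgreeUntil 1 (β ω.2 u) v →
        AgreeUntil 1 (ρ ω).1 u ∧ AgreeUntil 1 (ρ ω).2 v := by
  obtain ⟨c⟩ := ‹Nonempty U›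
  let u₀ : Control t₀ U := ⟨fun _ => c, measurable_const⟩
  let Γ : Ω₁ × Ω₂ → Control t₀ U → Control t₀ U := fun ω => α ω.1 ∘ β ω.2
  have hΓ_meas : Measurable (Function.uncurry Γ) :=
    hα_meas.comp (measurable_fst.fst.prodMk
      (hβ_meas.comp (measurable_fst.snd.prodMk measurable_snd)))
  have hu_meas : Measurable fun ω => (Γ ω)^[N] u₀ :=
    measurable_iterate_of_measurable_uncurry hΓ_meas N u₀
  refine ⟨fun ω => ((Γ ω)^[N] u₀, β ω.2 ((Γ ω)^[N] u₀)),
    hu_meas.prodMk (hβ_meas.comp (measurable_snd.prodMk hu_meas)), fun ω => ?_⟩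
  obtain ⟨h_fixed, h_unique⟩ :=
    agreeUntil_fixed_point_and_unique hs hs_zero hs_last (hα ω.1) (hβ ω.2) u₀
  exact ⟨⟨h_fixed, (agreeUntil_equivalence 1).refl _⟩, h_unique⟩

end FixedPoint

/-- For every pair `(α, β)` of random strategies and every `ω = (ω₁, ω₂) ∈ Ω_α × Ω_β`
there is a unique (up to a.e. equality) pair of controls `(u_ω, v_ω)` with
`α (ω₁, v_ω) = u_ω` and `β (ω₂, u_ω) = v_ω` a.e. on `[t₀,1]`; moreover the selection
`ρ : ω ↦ (u_ω, v_ω)` is measurable for the product σ-field on `Ω_α × Ω_β` and the Borel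
σ-field of the `L¹` topology on `𝒰(t₀) × 𝒱(t₀)`. -/
theorem random_strategies_fixed_point
    {U V : Type*} [MeasurableSpace U] [MetricSpace U] [BorelSpace U]
    [MeasurableSpace V] [MetricSpace V] [BorelSpace V]
    [Nonempty U] [Nonempty V]
    [TopologicalSpace.SeparableSpace U] [TopologicalSpace.SeparableSpace V]
    [BoundedSpace U] [BoundedSpace V]
    {t₀ : ℝ} (ht₀ : t₀ ∈ Set.Ico (0 : ℝ) 1)
    (α : RandStrategy t₀ V U) (β : RandStrategy t₀ U V) :
    ∃ ρ : (Fin α.n → ℝ) × (Fin β.n → ℝ) → Control t₀ U × Control t₀ V,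
      Measurable ρ ∧
      ∀ ω : (Fin α.n → ℝ) × (Fin β.n → ℝ),
        ((α.toFun ω.1 (ρ ω).2).1 =ᵐ[volume.restrict (Set.Icc t₀ 1)] (ρ ω).1.1 ∧
         (β.toFun ω.2 (ρ ω).1).1 =ᵐ[volume.restrict (Set.Icc t₀ 1)] (ρ ω).2.1) ∧
        (∀ (u' : Control t₀ U) (v' : Control t₀ V),
          (α.toFun ω.1 v').1 =ᵐ[volume.restrict (Set.Icc t₀ 1)] u'.1 →
          (β.toFun ω.2 u').1 =ᵐ[volume.restrict (Set.Icc t₀ 1)] v'.1 →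
          ((ρ ω).1.1 =ᵐ[volume.restrict (Set.Icc t₀ 1)] u'.1 ∧
           (ρ ω).2.1 =ᵐ[volume.restrict (Set.Icc t₀ 1)] v'.1)) := by
  exact random_strategies_fixed_point_general α.monotoneOn_s α.s_zero α.s_last
    α.measurable_toFun β.measurable_toFun α.hasDelay β.isNonanticipative
end

section
/- Let φ : Δ(K) → ℝ be a continuous concave function and x₀ ∈ ℝ^K. Then φ^♯ is differentiable at x₀ if and only if the map p ↦ φ(p) − ⟨x₀,p⟩ has a unique maximizer p₀ over Δ(K) and p₀ is an extreme point of φ; in this case ∇φ^♯(x₀) = −p₀, so that p₀ := −∇φ^♯(x₀) ∈ Δ(K) is an extreme point of φ. -/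
/-- The upper conjugate `φ^♯(x) = sup_{p ∈ Δ(K)} φ(p) − ⟨p,x⟩` of a function defined on
the simplex `Δ(K)`. -/
noncomputable def upperConj {K : Type*} [Fintype K] (φ : (K → ℝ) → ℝ) (x : K → ℝ) : ℝ :=
  sSup ((fun p => φ p - ∑ k, p k * x k) '' stdSimplex ℝ K)

/-- `p` is an extreme point of `φ` on `Δ(K)`: whenever `(p, φ p)` is a convex
combination, with positive weights, of points `(p_r, φ (p_r))` with `p_r ∈ Δ(K)`,
all the `p_r` equal `p`. -/
def IsExtremePointOf {K : Type*} [Fintype K] (φ : (K → ℝ) → ℝ) (p : K → ℝ) : Prop :=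
  p ∈ stdSimplex ℝ K ∧
  ∀ (m : ℕ) (lam : Fin m → ℝ) (ps : Fin m → (K → ℝ)),
    lam ∈ stdSimplex ℝ (Fin m) → (∀ r, 0 < lam r) → (∀ r, ps r ∈ stdSimplex ℝ K) →
    (∑ r, lam r • ps r) = p → (∑ r, lam r * φ (ps r)) = φ p →
    ∀ r, ps r = p

/-! If `p` maximizes `φ p - ℓ p x₀`, then `x ↦ φ^♯ x + ℓ p x` is minimal at `x₀`, so a derivative
of `φ^♯` at `x₀` can only be `-ℓ p`; differentiability therefore forces the maximizer to be unique.
Conversely, if the maximizer `p₀` is unique, then by compactness the maximizers `p` at nearby `x`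
are close to `p₀`, and comparing the values of `p` and `p₀` at `x` and `x₀` gives
`0 ≤ φ^♯ x - φ^♯ x₀ + ℓ p₀ (x - x₀) ≤ (ℓ p₀ - ℓ p) (x - x₀) = o(‖x - x₀‖)`.
Finally, a unique maximizer of `φ` minus a linear form is automatically an extreme point of `φ`:
if the values at `p_r` average to the maximum, each of them is the maximum. Here `ℓ p x = ⟨p, x⟩`,
but the differentiability part works for any continuous family `ℓ` of functionals. -/

open Filter Set Topology

/-- `a` is the unique maximizer of `f` on `s`. Membership of `a` in `s` is part of the notion,
unlike for `IsMaxOn`. -/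
def IsStrictMaxOn {α β : Type*} [Preorder β] (f : α → β) (s : Set α) (a : α) : Prop :=
  a ∈ s ∧ ∀ b ∈ s, b ≠ a → f b < f a

section StrictMax

variable {α β : Type*} {s : Set α} {a : α}

lemma IsStrictMaxOn.isMaxOn [Preorder β] {f : α → β} (h : IsStrictMaxOn f s a) :
    IsMaxOn f s a := fun b hb => by
  rcases eq_or_ne b a with rfl | hne
  · exact le_rfl
  · exact (h.2 b hb hne).le

lemma IsStrictMaxOn.eq_of_sum_mul_eq {f : α → ℝ} (h : IsStrictMaxOn f s a)
    {ι : Type*} {t : Finset ι} {w : ι → ℝ} {q : ι → α} (hw : ∀ i ∈ t, 0 < w i)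
    (hw_sum : ∑ i ∈ t, w i = 1) (hq : ∀ i ∈ t, q i ∈ s)
    (hf : ∑ i ∈ t, w i * f (q i) = f a) {i : ι} (hi : i ∈ t) : q i = a := by
  have hle : ∀ j ∈ t, w j * f (q j) ≤ w j * f a := fun j hj =>
    mul_le_mul_of_nonneg_left (h.isMaxOn (hq j hj)) (hw j hj).le
  have hsum : ∑ j ∈ t, w j * f (q j) = ∑ j ∈ t, w j * f a := by
    rw [hf, ← Finset.sum_mul, hw_sum, one_mul]
  have hvalue : f (q i) = f a :=
    mul_left_cancel₀ (hw i hi).ne' ((Finset.sum_eq_sum_iff_of_le hle).1 hsum i hi)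
  by_contra hne
  exact (h.2 _ (hq i hi) hne).ne hvalue

lemma IsStrictMaxOn.eventually_isMaxOn_mem {X : Type*} [TopologicalSpace X] [TopologicalSpace α]
    [LinearOrder β] [DenselyOrdered β] {f : X → α → β} {x₀ : X} {U : Set α} (hs : IsCompact s)
    (hf : UpperSemicontinuousOn (fun z : X × α => f z.1 z.2) (univ ×ˢ s))
    (hfa : LowerSemicontinuousAt (fun x => f x a) x₀)
    (h : IsStrictMaxOn (f x₀) s a) (hU : U ∈ 𝓝[s] a) :
    ∀ᶠ x in 𝓝 x₀, ∀ p ∈ s, IsMaxOn (f x) s p → p ∈ U := by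
  obtain ⟨V, hVo, haV, hVU⟩ := mem_nhdsWithin.1 hU
  -- The repeated `p ∈ s` makes the claim hold on full neighbourhoods of points of `s \ V`.
  suffices hbeaten : ∀ᶠ x in 𝓝 x₀, ∀ p ∈ s \ V, p ∈ s → f x p < f x a by
    filter_upwards [hbeaten] with x hx p hp hmax
    by_contra hpU
    have hpV : p ∉ V := fun hpV => hpU (hVU ⟨hpV, hp⟩)
    exact (hx p ⟨hp, hpV⟩ hp).not_ge (hmax h.1)
  refine (hs.diff hVo).eventually_forall_of_forall_eventually fun p hp => ?_
  obtain ⟨c, hpc, hca⟩ := exists_between (h.2 p hp.1 fun hpa => hp.2 (hpa ▸ haV))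
  have hlt : ∀ᶠ z in 𝓝 (x₀, p), z ∈ univ ×ˢ s → f z.1 z.2 < c :=
    eventually_nhdsWithin_iff.1 (hf (x₀, p) ⟨mem_univ _, hp.1⟩ c hpc)
  have hgt : ∀ᶠ z in 𝓝 (x₀, p), c < f z.1 a :=
    (continuousAt_fst (p := (x₀, p))).eventually (hfa c hca)
  filter_upwards [hlt, hgt] with z hzlt hzgt hzs
  exact (hzlt ⟨mem_univ _, hzs⟩).trans hzgt

end StrictMax

/-- The upper conjugate `x ↦ sup_{p ∈ C} φ p - ℓ p x` of `φ` over a set `C` paired with `E` through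
`ℓ`. It has the junk value `0` at `x` where the supremum is over an empty or unbounded set. -/
noncomputable def upperConjOn {P E : Type*} [NormedAddCommGroup E] [NormedSpace ℝ E]
    (C : Set P) (φ : P → ℝ) (ℓ : P → StrongDual ℝ E) (x : E) : ℝ :=
  sSup ((fun p => φ p - ℓ p x) '' C)

section UpperConjOn

variable {P E : Type*} [NormedAddCommGroup E] [NormedSpace ℝ E]
  {C : Set P} {φ : P → ℝ} {ℓ : P → StrongDual ℝ E} {x₀ : E} {p₀ : P}

lemma upperConjOn_eq_of_isMaxOn {x : E} {p : P} (hp : p ∈ C)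
    (hmax : IsMaxOn (fun q => φ q - ℓ q x) C p) : upperConjOn C φ ℓ x = φ p - ℓ p x :=
  IsGreatest.csSup_eq ⟨mem_image_of_mem _ hp, forall_mem_image.2 hmax⟩

variable [TopologicalSpace P]

lemma upperSemicontinuousOn_uncurry_sub_pairing (hφ : UpperSemicontinuousOn φ C)
    (hℓ : ContinuousOn ℓ C) :
    UpperSemicontinuousOn (fun z : E × P => φ z.2 - ℓ z.2 z.1) (univ ×ˢ C) := by
  have hsnd : MapsTo Prod.snd ((univ : Set E) ×ˢ C) C := fun _ hz => hz.2
  have hpairing : ContinuousOn (fun z : E × P => -ℓ z.2 z.1) (univ ×ˢ C) :=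
    ((hℓ.comp continuousOn_snd hsnd).clm_apply continuousOn_fst).neg
  simpa only [sub_eq_add_neg, Function.comp_apply] using
    (hφ.comp continuousOn_snd hsnd).add hpairing.upperSemicontinuousOn

lemma upperSemicontinuousOn_sub_pairing (hφ : UpperSemicontinuousOn φ C)
    (hℓ : ContinuousOn ℓ C) (x : E) : UpperSemicontinuousOn (fun p => φ p - ℓ p x) C :=
  (upperSemicontinuousOn_uncurry_sub_pairing hφ hℓ).comp (g := fun p => (x, p))
    (by fun_prop) fun _ hp => ⟨mem_univ x, hp⟩

lemma sub_pairing_le_upperConjOn (hC : IsCompact C) (hφ : UpperSemicontinuousOn φ C)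
    (hℓ : ContinuousOn ℓ C) {p : P} (hp : p ∈ C) (x : E) :
    φ p - ℓ p x ≤ upperConjOn C φ ℓ x :=
  le_csSup ((upperSemicontinuousOn_sub_pairing hφ hℓ x).bddAbove_of_isCompact hC)
    (mem_image_of_mem _ hp)

lemma eq_neg_pairing_of_hasFDerivAt_upperConjOn (hC : IsCompact C)
    (hφ : UpperSemicontinuousOn φ C) (hℓ : ContinuousOn ℓ C) {g : StrongDual ℝ E}
    (hg : HasFDerivAt (upperConjOn C φ ℓ) g x₀) (hp₀ : p₀ ∈ C)
    (hmax : IsMaxOn (fun p => φ p - ℓ p x₀) C p₀) : g = -ℓ p₀ := by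
  have hmin : IsLocalMin (fun x => upperConjOn C φ ℓ x + ℓ p₀ x) x₀ := Eventually.of_forall
    fun x => calc
      upperConjOn C φ ℓ x₀ + ℓ p₀ x₀ = φ p₀ := by
        rw [upperConjOn_eq_of_isMaxOn hp₀ hmax, sub_add_cancel]
      _ ≤ upperConjOn C φ ℓ x + ℓ p₀ x :=
        sub_le_iff_le_add.1 (sub_pairing_le_upperConjOn hC hφ hℓ hp₀ x)
  exact eq_neg_of_add_eq_zero_left (hmin.hasFDerivAt_eq_zero (hg.add (ℓ p₀).hasFDerivAt))

lemma IsStrictMaxOn.hasFDerivAt_upperConjOn (hC : IsCompact C)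
    (hφ : UpperSemicontinuousOn φ C) (hℓ : ContinuousOn ℓ C)
    (h : IsStrictMaxOn (fun p => φ p - ℓ p x₀) C p₀) :
    HasFDerivAt (upperConjOn C φ ℓ) (-ℓ p₀) x₀ := by
  rw [hasFDerivAt_iff_isLittleO, Asymptotics.isLittleO_iff]
  intro c hc
  have hnear : ∀ᶠ x in 𝓝 x₀, ∀ p ∈ C, IsMaxOn (fun q => φ q - ℓ q x) C p → ‖ℓ p - ℓ p₀‖ < c :=
    h.eventually_isMaxOn_mem hC (upperSemicontinuousOn_uncurry_sub_pairing hφ hℓ)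
      (by fun_prop : Continuous fun x => φ p₀ - ℓ p₀ x).continuousAt.lowerSemicontinuousAt
      ((hℓ p₀ h.1).eventually (eventually_norm_sub_lt _ hc))
  filter_upwards [hnear] with x hx
  obtain ⟨p, hp, hmax⟩ :=
    (upperSemicontinuousOn_sub_pairing hφ hℓ x).exists_isMaxOn ⟨p₀, h.1⟩ hC
  have hvalue₀ := upperConjOn_eq_of_isMaxOn h.1 h.isMaxOn
  have hvalue := upperConjOn_eq_of_isMaxOn hp hmax
  have hlower : φ p₀ - ℓ p₀ x ≤ upperConjOn C φ ℓ x := sub_pairing_le_upperConjOn hC hφ hℓ h.1 x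
  have hlower₀ : φ p - ℓ p x₀ ≤ upperConjOn C φ ℓ x₀ := sub_pairing_le_upperConjOn hC hφ hℓ hp x₀
  have hpairing : -(ℓ p - ℓ p₀) (x - x₀) ≤ c * ‖x - x₀‖ :=
    (neg_le_abs _).trans ((ℓ p - ℓ p₀).le_of_opNorm_le (hx p hp hmax).le _)
  simp only [sub_apply, neg_apply, map_sub] at hpairing ⊢
  rw [Real.norm_of_nonneg] <;> linarith

theorem differentiableAt_upperConjOn_iff (hC : IsCompact C) (hne : C.Nonempty)
    (hφ : UpperSemicontinuousOn φ C) (hℓ : ContinuousOn ℓ C) (hinj : InjOn ℓ C) :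
    DifferentiableAt ℝ (upperConjOn C φ ℓ) x₀ ↔
      ∃ p₀, IsStrictMaxOn (fun p => φ p - ℓ p x₀) C p₀ := by
  refine ⟨fun hd => ?_, fun ⟨p₀, h⟩ => (h.hasFDerivAt_upperConjOn hC hφ hℓ).differentiableAt⟩
  obtain ⟨p₀, hp₀, hmax₀⟩ := (upperSemicontinuousOn_sub_pairing hφ hℓ x₀).exists_isMaxOn hne hC
  refine ⟨p₀, hp₀, fun p hp hpne => (hmax₀ hp).lt_of_ne fun heq => hpne (hinj hp hp₀ ?_)⟩
  have hmax : IsMaxOn (fun q => φ q - ℓ q x₀) C p := fun q hq => (hmax₀ hq).trans heq.ge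
  exact neg_injective <|
    (eq_neg_pairing_of_hasFDerivAt_upperConjOn hC hφ hℓ hd.hasFDerivAt hp hmax).symm.trans
      (eq_neg_pairing_of_hasFDerivAt_upperConjOn hC hφ hℓ hd.hasFDerivAt hp₀ hmax₀)

end UpperConjOn

section Simplex

variable {K : Type*} [Fintype K]

/-- The pairing `⟨p, x⟩ = ∑ k, p k * x k` as a continuous linear map `p ↦ ⟨p, ·⟩` into the dual,
which makes `upperConj` an instance of `upperConjOn`. -/
noncomputable def dotDual : (K → ℝ) →L[ℝ] StrongDual ℝ (K → ℝ) :=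
  ∑ k, (ContinuousLinearMap.proj k : StrongDual ℝ (K → ℝ)).smulRight (ContinuousLinearMap.proj k)

lemma dotDual_apply (p x : K → ℝ) : dotDual p x = ∑ k, p k * x k := by
  simp [dotDual]

lemma dotDual_injective : Function.Injective (dotDual : (K → ℝ) → StrongDual ℝ (K → ℝ)) := by
  classical
  intro p q hpq
  funext k
  simpa [dotDual_apply, Pi.single_apply] using DFunLike.congr_fun hpq (Pi.single k 1)

lemma upperConj_eq_upperConjOn (φ : (K → ℝ) → ℝ) :
    upperConj φ = upperConjOn (stdSimplex ℝ K) φ dotDual := by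
  funext x
  simp only [upperConj, upperConjOn, dotDual_apply]

lemma IsStrictMaxOn.isExtremePointOf {φ : (K → ℝ) → ℝ} {L : (K → ℝ) →ₗ[ℝ] ℝ} {p₀ : K → ℝ}
    (h : IsStrictMaxOn (fun p => φ p - L p) (stdSimplex ℝ K) p₀) : IsExtremePointOf φ p₀ := by
  refine ⟨h.1, fun m lam ps hlam hpos hps hsum hφ r => ?_⟩
  have hvalue : ∑ i, lam i * (φ (ps i) - L (ps i)) = φ p₀ - L p₀ := by
    simp only [mul_sub, Finset.sum_sub_distrib, hφ, ← hsum, map_sum, map_smul, smul_eq_mul]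
  exact h.eq_of_sum_mul_eq (fun i _ => hpos i) hlam.2 (fun i _ => hps i) hvalue
    (Finset.mem_univ r)

end Simplex

theorem envelope_differentiability_general {K : Type*} [Fintype K] [Nonempty K]
    (φ : (K → ℝ) → ℝ) (hφ : UpperSemicontinuousOn φ (stdSimplex ℝ K)) (x₀ : K → ℝ) :
    (DifferentiableAt ℝ (upperConj φ) x₀ ↔
      ∃ p₀ ∈ stdSimplex ℝ K,
        (∀ p ∈ stdSimplex ℝ K, p ≠ p₀ →
          φ p - ∑ k, x₀ k * p k < φ p₀ - ∑ k, x₀ k * p₀ k) ∧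
        IsExtremePointOf φ p₀) ∧
    (∀ p₀ ∈ stdSimplex ℝ K,
      (∀ p ∈ stdSimplex ℝ K, p ≠ p₀ →
          φ p - ∑ k, x₀ k * p k < φ p₀ - ∑ k, x₀ k * p₀ k) →
      DifferentiableAt ℝ (upperConj φ) x₀ →
      ∀ y : K → ℝ, fderiv ℝ (upperConj φ) x₀ y = -∑ k, p₀ k * y k) := by
  classical
  have hdot : ∀ p : K → ℝ, ∑ k, x₀ k * p k = dotDual p x₀ := fun p => by
    simp only [dotDual_apply, mul_comm]
  have hC := isCompact_stdSimplex ℝ K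
  have hℓ : ContinuousOn dotDual (stdSimplex ℝ K) := dotDual.continuous.continuousOn
  have hne : (stdSimplex ℝ K).Nonempty := ⟨_, single_mem_stdSimplex ℝ (Classical.arbitrary K)⟩
  simp only [hdot, upperConj_eq_upperConjOn]
  refine ⟨(differentiableAt_upperConjOn_iff hC hne hφ hℓ dotDual_injective.injOn).trans
    ⟨?_, ?_⟩, ?_⟩
  · rintro ⟨p₀, h⟩
    exact ⟨p₀, h.1, h.2, h.isExtremePointOf (L := (dotDual.flip x₀).toLinearMap)⟩
  · rintro ⟨p₀, hp₀, huniq, -⟩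
    exact ⟨p₀, hp₀, huniq⟩
  · intro p₀ hp₀ huniq _ y
    have h : IsStrictMaxOn (fun p => φ p - dotDual p x₀) (stdSimplex ℝ K) p₀ := ⟨hp₀, huniq⟩
    rw [(h.hasFDerivAt_upperConjOn hC hφ hℓ).fderiv, neg_apply, dotDual_apply]

/-- Envelope theorem: for a continuous concave `φ : Δ(K) → ℝ`, the conjugate `φ^♯` is
differentiable at `x₀` iff `p ↦ φ(p) − ⟨x₀,p⟩` has a unique maximizer `p₀` on `Δ(K)`
and `p₀` is an extreme point of `φ`; in that case `∇φ^♯(x₀) = −p₀`. -/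
theorem envelope_differentiability {K : Type*} [Fintype K] [Nonempty K]
    (φ : (K → ℝ) → ℝ) (hconc : ConcaveOn ℝ (stdSimplex ℝ K) φ)
    (hcont : ContinuousOn φ (stdSimplex ℝ K)) (x₀ : K → ℝ) :
    (DifferentiableAt ℝ (upperConj φ) x₀ ↔
      ∃ p₀ ∈ stdSimplex ℝ K,
        (∀ p ∈ stdSimplex ℝ K, p ≠ p₀ →
          φ p - ∑ k, x₀ k * p k < φ p₀ - ∑ k, x₀ k * p₀ k) ∧
        IsExtremePointOf φ p₀) ∧
    (∀ p₀ ∈ stdSimplex ℝ K,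
      (∀ p ∈ stdSimplex ℝ K, p ≠ p₀ →
          φ p - ∑ k, x₀ k * p k < φ p₀ - ∑ k, x₀ k * p₀ k) →
      DifferentiableAt ℝ (upperConj φ) x₀ →
      ∀ y : K → ℝ, fderiv ℝ (upperConj φ) x₀ y = -∑ k, p₀ k * y k) :=
  envelope_differentiability_general φ hcont.upperSemicontinuousOn x₀
end

section
/- Let X be a nonempty set, L a finite nonempty set, F : X × Δ(L) → ℝ such that F(x,·) is convex on Δ(L) for every x ∈ X, G : Δ(L) → ℝ convex, and ψ : X → ℝ. Suppose (x*,q*) ∈ X × Δ(L) maximizes (x,q) ↦ G(q) − F(x,q) + ψ(x) over X × Δ(L) and that ψ(x*) = 0. Let η ∈ ℝ^L be a subgradient of G at q*, i.e. G(q) ≥ G(q*) + ⟨η, q − q*⟩ for all q ∈ Δ(L). Then η is also a subgradient of F(x*,·) at q*, and for every x ∈ X one has F^♭(x, −η) ≥ F^♭(x*, −η) + ψ(x), with equality when x = x*, where F^♭(x, η') := inf_{q∈Δ(L)} F(x,q) + ⟨q, η'⟩. -/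
/-- `F^♭(x, η') = inf_{q ∈ Δ(L)} F(x,q) + ⟨q, η'⟩`. -/
noncomputable def Fflat {X L : Type*} [Fintype L]
    (F : X → (L → ℝ) → ℝ) (x : X) (η : L → ℝ) : ℝ :=
  sInf ((fun q => F x q + ∑ l, q l * η l) '' stdSimplex ℝ L)

/-!
Subgradients are minimality in disguise: `η` is a subgradient of `f` at `q*` exactly when `q*`
minimizes `f - ⟨η, ·⟩`. Subtracting `G(q) - F(x, q) + ψ(x)`, maximal at `(x*, q*)`, from
`G - ⟨η, ·⟩`, minimal at `q*`, cancels `G`, so `(x*, q*)` minimizes `F(x, q) - ⟨η, q⟩ - ψ(x)`.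
Fixing `x = x*` gives the subgradient property of `F(x*, ·)`, and taking the infimum over `q`
shows that `x*` minimizes `F^♭(·, -η) - ψ`.
-/

open Set

section JointMinimum

variable {X Q : Type*} {A : Set X} {S : Set Q} {f : X → Q → ℝ} {ψ : X → ℝ} {a : X} {b : Q}

theorem isMinOn_slice_of_isMinOn_prod (ha : a ∈ A)
    (hmin : IsMinOn (fun p : X × Q => f p.1 p.2 - ψ p.1) (A ×ˢ S) (a, b)) :
    IsMinOn (f a) S b :=
  isMinOn_iff.2 fun q hq => (sub_le_sub_iff_right (ψ a)).1 (isMinOn_iff.1 hmin (a, q) ⟨ha, hq⟩)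

theorem isMinOn_sInf_image_sub_of_isMinOn_prod (ha : a ∈ A) (hb : b ∈ S)
    (hmin : IsMinOn (fun p : X × Q => f p.1 p.2 - ψ p.1) (A ×ˢ S) (a, b)) :
    IsMinOn (fun x => sInf (f x '' S) - ψ x) A a := by
  have sInf_slice : sInf (f a '' S) = f a b :=
    sInf_image'.trans ((isMinOn_slice_of_isMinOn_prod ha hmin).iInf_eq hb)
  refine isMinOn_iff.2 fun x hx => ?_
  rw [sInf_slice, le_sub_iff_add_le]
  refine le_csInf ⟨f x b, mem_image_of_mem _ hb⟩ (forall_mem_image.2 fun q hq => ?_)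
  exact le_sub_iff_add_le.1 (isMinOn_iff.1 hmin (x, q) ⟨hx, hq⟩)

end JointMinimum

theorem isMinOn_sub_sum_mul_iff {L : Type*} [Fintype L] {S : Set (L → ℝ)} {f : (L → ℝ) → ℝ}
    {η q₀ : L → ℝ} :
    IsMinOn (fun q => f q - ∑ l, q l * η l) S q₀ ↔
      ∀ q ∈ S, f q₀ + ∑ l, η l * (q l - q₀ l) ≤ f q := by
  refine isMinOn_iff.trans (forall₂_congr fun q _ => ?_)
  have sum_eq : ∑ l, η l * (q l - q₀ l) = ∑ l, q l * η l - ∑ l, q₀ l * η l := by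
    simp only [mul_comm (η _), sub_mul, Finset.sum_sub_distrib]
  rw [sum_eq]
  constructor <;> intro h <;> linarith

theorem Fflat_neg {X L : Type*} [Fintype L] (F : X → (L → ℝ) → ℝ) (x : X) (η : L → ℝ) :
    Fflat F x (-η) = sInf ((fun q => F x q - ∑ l, q l * η l) '' stdSimplex ℝ L) := by
  simp only [Fflat, Pi.neg_apply, mul_neg, Finset.sum_neg_distrib, sub_eq_add_neg]

/-- `h` plays the role of `⟨η, ·⟩`, and minimality of `G - h` that of the subgradient inequality. -/
theorem dual_test_function_general {X Q : Type*} {A : Set X} {S : Set Q} {F : X → Q → ℝ}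
    {G h : Q → ℝ} {ψ : X → ℝ} {xs : X} {qs : Q} (hxs : xs ∈ A) (hqs : qs ∈ S)
    (hmax : IsMaxOn (fun p : X × Q => G p.2 - F p.1 p.2 + ψ p.1) (A ×ˢ S) (xs, qs))
    (hG : IsMinOn (fun q => G q - h q) S qs) :
    IsMinOn (fun q => F xs q - h q) S qs ∧
      IsMinOn (fun x => sInf ((fun q => F x q - h q) '' S) - ψ x) A xs := by
  have joint_min :
      IsMinOn (fun p : X × Q => F p.1 p.2 - h p.2 - ψ p.1) (A ×ˢ S) (xs, qs) := by
    have hG_prod : IsMinOn (fun p : X × Q => G p.2 - h p.2) (A ×ˢ S) (xs, qs) :=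
      fun p hp => hG hp.2
    have cancel_G (p : X × Q) : F p.1 p.2 - h p.2 - ψ p.1 =
        G p.2 - h p.2 - (G p.2 - F p.1 p.2 + ψ p.1) := by ring
    simpa only [cancel_G] using hG_prod.sub hmax
  exact ⟨isMinOn_slice_of_isMinOn_prod (f := fun x q => F x q - h q) hxs joint_min,
    isMinOn_sInf_image_sub_of_isMinOn_prod hxs hqs joint_min⟩

/-- Key dual test-function construction of the comparison principle: if `(x*, q*)`
maximizes `(x,q) ↦ G(q) − F(x,q) + ψ(x)` over `X × Δ(L)`, `ψ(x*) = 0`, and `η` is a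
subgradient of `G` at `q*`, then `η` is a subgradient of `F(x*, ·)` at `q*`, and
`F^♭(x, −η) ≥ F^♭(x*, −η) + ψ(x)` for every `x`, with equality at `x = x*`. -/
theorem dual_test_function {X : Type*} [Nonempty X] {L : Type*} [Fintype L] [Nonempty L]
    (F : X → (L → ℝ) → ℝ) (hF : ∀ x : X, ConvexOn ℝ (stdSimplex ℝ L) (F x))
    (G : (L → ℝ) → ℝ) (hG : ConvexOn ℝ (stdSimplex ℝ L) G)
    (ψ : X → ℝ)
    (xs : X) (qs : L → ℝ) (hqs : qs ∈ stdSimplex ℝ L)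
    (hmax : ∀ x : X, ∀ q ∈ stdSimplex ℝ L,
      G q - F x q + ψ x ≤ G qs - F xs qs + ψ xs)
    (hψ : ψ xs = 0)
    (η : L → ℝ)
    (hη : ∀ q ∈ stdSimplex ℝ L, G qs + ∑ l, η l * (q l - qs l) ≤ G q) :
    (∀ q ∈ stdSimplex ℝ L, F xs qs + ∑ l, η l * (q l - qs l) ≤ F xs q) ∧
    (∀ x : X, Fflat F xs (-η) + ψ x ≤ Fflat F x (-η)) ∧
    (Fflat F xs (-η) = Fflat F xs (-η) + ψ xs) := by
  obtain ⟨hFmin, hflat⟩ := dual_test_function_general (mem_univ xs) hqs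
    (fun p hp => hmax p.1 p.2 hp.2) (isMinOn_sub_sum_mul_iff.2 hη)
  refine ⟨isMinOn_sub_sum_mul_iff.1 hFmin, fun x => ?_, by rw [hψ, add_zero]⟩
  simpa only [Fflat_neg, hψ, sub_zero, le_sub_iff_add_le] using isMinOn_iff.1 hflat x (mem_univ x)
end

section
/- Let u : Δ(K×L) → ℝ be continuous and let W : Δ(K×L) → ℝ be Lipschitz continuous and K-concave, i.e. p ↦ W(p⊗Q) is concave on Δ(K) for every Q ∈ Δ(L)^K. Assume that for every Q ∈ Δ(L)^K, the convex function ζ ↦ W_K^♯(ζ,Q) := sup_{p∈Δ(K)} W(p⊗Q) − ⟨p,ζ⟩ is a viscosity sub-solution on ℝ^K of −w(ζ) + ⟨Dw(ζ),ζ⟩ + u_K(−Dw(ζ),Q) ≥ 0, meaning: for every C¹ function φ : ℝ^K → ℝ such that W_K^♯(·,Q) − φ has a local maximum at ζ ∈ ℝ^K, one has −W_K^♯(ζ,Q) + ⟨Dφ(ζ),ζ⟩ + u(−Dφ(ζ) ⊗ Q) ≥ 0 (in particular −Dφ(ζ) ∈ Δ(K) whenever this expression is required to make sense, which holds at such points).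 If, for some Q₀ ∈ Δ(L)^K, the map ζ ↦ W_K^♯(ζ,Q₀) is differentiable at ζ₀ ∈ ℝ^K, then p₀ := −∇_ζ W_K^♯(ζ₀,Q₀) belongs to Δ(K) and W(p₀⊗Q₀) ≤ u(p₀⊗Q₀). -/
/-- `p ⊗ Q ∈ Δ(K×L)`: `(p ⊗ Q)(k,ℓ) = p(k) Q(k)(ℓ)`. -/
def tensKQ {K L : Type*} (p : K → ℝ) (Q : K → L → ℝ) : (K × L) → ℝ :=
  fun kl => p kl.1 * Q kl.1 kl.2

/-- `W_K^♯(ζ, Q) = sup_{p ∈ Δ(K)} W(p⊗Q) − ⟨p, ζ⟩`. -/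
noncomputable def WsharpK {K L : Type*} [Fintype K]
    (W : ((K × L) → ℝ) → ℝ) (ζ : K → ℝ) (Q : K → L → ℝ) : ℝ :=
  sSup ((fun p => W (tensKQ p Q) - ∑ k, p k * ζ k) '' stdSimplex ℝ K)

/-! Smooth functions touch a continuous function from above at a dense set of points. For the
conjugate `x ↦ sup_{p ∈ S} G p - p x`, the gradient of a test function at such a point is `-p` for
every maximizer `p`, and the sub-solution inequality reads `G p ≤ U p`. Hence the conjugates of `G`
over `S` and over `{p ∈ S | G p ≤ U p}` agree on a dense set, and by continuity everywhere: every
point has a maximizer with `G p ≤ U p`. At a point of differentiability the only maximizer is minus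
the gradient. -/

section Touching

variable {E : Type*} [NormedAddCommGroup E] [NormedSpace ℝ E]

theorem fderiv_eq_of_isLocalMax_sub_of_isLocalMin_sub {f φ ψ : E → ℝ} {x : E}
    (hφ : DifferentiableAt ℝ φ x) (hψ : DifferentiableAt ℝ ψ x)
    (hmax : IsLocalMax (fun y => f y - φ y) x) (hmin : IsLocalMin (fun y => f y - ψ y) x) :
    fderiv ℝ φ x = fderiv ℝ ψ x := by
  have hφψ : IsLocalMin (φ - ψ) x := by
    filter_upwards [hmax, hmin] with y hy_max hy_min
    simp only [Pi.sub_apply]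
    linarith
  exact sub_eq_zero.mp ((fderiv_sub hφ hψ).symm.trans hφψ.fderiv_eq_zero)

theorem dense_setOf_exists_contDiff_isLocalMax_sub [FiniteDimensional ℝ E] {f : E → ℝ}
    (hf : Continuous f) (n : ℕ∞) :
    Dense {x | ∃ φ : E → ℝ, ContDiff ℝ n φ ∧ IsLocalMax (fun y => f y - φ y) x} := by
  refine Metric.dense_iff.mpr fun c r hr => ?_
  have hcompact : IsCompact (Metric.closedBall c r) := isCompact_closedBall c r
  obtain ⟨B, hB⟩ := hcompact.bddAbove_image hf.continuousOn
  let b : ContDiffBump c := ⟨r / 2, r, half_pos hr, half_lt_self hr⟩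
  -- Subtracting `φ` lifts `f` at `c` above its maximum on the boundary, where `φ` vanishes.
  let φ : E → ℝ := fun y => (f c - B - 1) * b y
  have hφ : ContDiff ℝ n φ := contDiff_const.mul b.contDiff
  have hφ_center : φ c = f c - B - 1 := by
    simp only [φ, b.one_of_mem_closedBall (Metric.mem_closedBall_self b.rIn_pos.le), mul_one]
  have hboundary : ∀ y ∈ Metric.closedBall c r \ Metric.ball c r, f y - φ y < f c - φ c := by
    rintro y ⟨hy, hy_ball⟩
    have hφ_boundary : φ y = 0 := by
      simp only [φ, b.zero_of_le_dist (not_lt.mp hy_ball), mul_zero]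
    linarith [hB (Set.mem_image_of_mem f hy)]
  obtain ⟨x, hx, hmax⟩ := hcompact.exists_isLocalMax_mem_open Metric.ball_subset_closedBall
    (hf.sub hφ.continuous).continuousOn (Metric.mem_closedBall_self hr.le) hboundary
    Metric.isOpen_ball
  exact ⟨x, hx, φ, hφ, hmax⟩

end Touching

section Conjugate

variable {E : Type*} [NormedAddCommGroup E] [NormedSpace ℝ E]

/-- The conjugate `x ↦ sup_{p ∈ S} G p - p x` of a function `G` on a set `S` of functionals, with
the sign convention of `WsharpK`. It takes the junk value `0` where the supremum is not a real
number. -/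
noncomputable def conjugateOn (S : Set (StrongDual ℝ E)) (G : StrongDual ℝ E → ℝ) (x : E) : ℝ :=
  sSup ((fun p => G p - p x) '' S)

/-- Viscosity sub-solutions on `E` of `-w(x) + ⟨Dw(x), x⟩ + U(-Dw(x)) ≥ 0`, tested from above with
`C¹` functions. -/
def IsViscositySubsolution (U : StrongDual ℝ E → ℝ) (w : E → ℝ) : Prop :=
  ∀ φ : E → ℝ, ContDiff ℝ 1 φ → ∀ x : E, IsLocalMax (fun y => w y - φ y) x →
    0 ≤ -w x + fderiv ℝ φ x x + U (-fderiv ℝ φ x)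

variable {S : Set (StrongDual ℝ E)} {G U : StrongDual ℝ E → ℝ} {p : StrongDual ℝ E} {x : E}

theorem continuousOn_sub_apply (hG : ContinuousOn G S) (x : E) :
    ContinuousOn (fun p => G p - p x) S :=
  hG.sub (by fun_prop)

theorem sub_apply_le_conjugateOn (hS : IsCompact S) (hG : ContinuousOn G S) (hp : p ∈ S) (x : E) :
    G p - p x ≤ conjugateOn S G x :=
  le_csSup (hS.bddAbove_image (continuousOn_sub_apply hG x)) (Set.mem_image_of_mem _ hp)

theorem exists_mem_conjugateOn_eq (hS : IsCompact S) (hS_ne : S.Nonempty) (hG : ContinuousOn G S)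
    (x : E) : ∃ p ∈ S, conjugateOn S G x = G p - p x :=
  hS.exists_sSup_image_eq hS_ne (continuousOn_sub_apply hG x)

theorem continuous_conjugateOn (hS : IsCompact S) (hG : ContinuousOn G S) :
    Continuous (conjugateOn S G) := by
  have : CompactSpace S := isCompact_iff_compactSpace.mp hS
  have hG_restrict : Continuous fun p : S => G p := hG.domRestrict
  have hconj : conjugateOn S G = fun x => sSup ((fun p : S => G p - p.1 x) '' Set.univ) := by
    ext x
    rw [conjugateOn, sSup_image', Set.image_univ, sSup_range]
  rw [hconj]
  exact isCompact_univ.continuous_sSup (f := fun x (p : S) => G p - p.1 x) <|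
    (hG_restrict.comp continuous_snd).sub
      ((continuous_subtype_val.comp continuous_snd).clm_apply continuous_fst)

theorem neg_fderiv_eq_of_isLocalMax_conjugateOn_sub (hS : IsCompact S) (hG : ContinuousOn G S)
    (hp : p ∈ S) (hpx : conjugateOn S G x = G p - p x) {φ : E → ℝ} (hφ : DifferentiableAt ℝ φ x)
    (hmax : IsLocalMax (fun y => conjugateOn S G y - φ y) x) : -fderiv ℝ φ x = p := by
  have hmin : IsLocalMin (fun y => conjugateOn S G y - (-p) y) x :=
    Filter.Eventually.of_forall fun y => by
      simp only [neg_apply]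
      linarith [sub_apply_le_conjugateOn hS hG hp y]
  rw [fderiv_eq_of_isLocalMax_sub_of_isLocalMin_sub hφ (-p).differentiableAt hmax hmin,
    ContinuousLinearMap.fderiv, neg_neg]

theorem neg_fderiv_conjugateOn (hS : IsCompact S) (hG : ContinuousOn G S) (hp : p ∈ S)
    (hpx : conjugateOn S G x = G p - p x) (hdiff : DifferentiableAt ℝ (conjugateOn S G) x) :
    -fderiv ℝ (conjugateOn S G) x = p :=
  neg_fderiv_eq_of_isLocalMax_conjugateOn_sub hS hG hp hpx hdiff <| by
    simpa only [sub_self] using isLocalMax_const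

theorem IsViscositySubsolution.le_of_isLocalMax (hsub : IsViscositySubsolution U (conjugateOn S G))
    (hS : IsCompact S) (hG : ContinuousOn G S) (hp : p ∈ S) (hpx : conjugateOn S G x = G p - p x)
    {φ : E → ℝ} (hφ : ContDiff ℝ 1 φ) (hmax : IsLocalMax (fun y => conjugateOn S G y - φ y) x) :
    G p ≤ U p := by
  have hgrad : -fderiv ℝ φ x = p := neg_fderiv_eq_of_isLocalMax_conjugateOn_sub hS hG hp hpx
    (hφ.differentiable one_ne_zero x) hmax
  have hpair : fderiv ℝ φ x x = -p x := by rw [← hgrad, neg_apply, neg_neg]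
  have hineq := hsub φ hφ x hmax
  rw [hgrad, hpair, hpx] at hineq
  linarith

variable [FiniteDimensional ℝ E]

theorem IsViscositySubsolution.dense_setOf_exists_mem_sep_le_conjugateOn_eq
    (hsub : IsViscositySubsolution U (conjugateOn S G)) (hS : IsCompact S) (hS_ne : S.Nonempty)
    (hG : ContinuousOn G S) :
    Dense {x | ∃ p ∈ {p ∈ S | G p ≤ U p}, conjugateOn S G x = G p - p x} := by
  refine (dense_setOf_exists_contDiff_isLocalMax_sub (continuous_conjugateOn hS hG) 1).mono ?_
  rintro x ⟨φ, hφ, hmax⟩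
  obtain ⟨p, hp, hpx⟩ := exists_mem_conjugateOn_eq hS hS_ne hG x
  exact ⟨p, ⟨hp, hsub.le_of_isLocalMax hS hG hp hpx hφ hmax⟩, hpx⟩

theorem IsViscositySubsolution.exists_mem_sep_le_conjugateOn_eq
    (hsub : IsViscositySubsolution U (conjugateOn S G)) (hS : IsCompact S) (hS_ne : S.Nonempty)
    (hG : ContinuousOn G S) (hU : ContinuousOn U S) (x : E) :
    ∃ p ∈ {p ∈ S | G p ≤ U p}, conjugateOn S G x = G p - p x := by
  let A : Set (StrongDual ℝ E) := {p ∈ S | G p ≤ U p}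
  have hAS : A ⊆ S := Set.sep_subset _ _
  have hA : IsCompact A := hS.of_isClosed_subset (hS.isClosed.isClosed_le hG hU) hAS
  have hGA : ContinuousOn G A := hG.mono hAS
  have hdense := hsub.dense_setOf_exists_mem_sep_le_conjugateOn_eq hS hS_ne hG
  obtain ⟨-, q, hq, -⟩ := hdense.nonempty
  have hconj : conjugateOn S G = conjugateOn A G := by
    refine (continuous_conjugateOn hS hG).ext_on hdense (continuous_conjugateOn hA hGA) ?_
    rintro y ⟨p, hp, hpy⟩
    obtain ⟨p', hp', hp'y⟩ := exists_mem_conjugateOn_eq hA ⟨q, hq⟩ hGA y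
    apply le_antisymm
    · exact hpy.trans_le (sub_apply_le_conjugateOn hA hGA hp y)
    · exact hp'y.trans_le (sub_apply_le_conjugateOn hS hG (hAS hp') y)
  rw [hconj]
  exact exists_mem_conjugateOn_eq hA ⟨q, hq⟩ hGA x

theorem IsViscositySubsolution.neg_fderiv_conjugateOn_mem
    (hsub : IsViscositySubsolution U (conjugateOn S G)) (hS : IsCompact S) (hS_ne : S.Nonempty)
    (hG : ContinuousOn G S) (hU : ContinuousOn U S)
    (hdiff : DifferentiableAt ℝ (conjugateOn S G) x) :
    -fderiv ℝ (conjugateOn S G) x ∈ {p ∈ S | G p ≤ U p} := by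
  obtain ⟨p, hp, hpx⟩ := hsub.exists_mem_sep_le_conjugateOn_eq hS hS_ne hG hU x
  rwa [neg_fderiv_conjugateOn hS hG hp.1 hpx hdiff]

end Conjugate

section Simplex

variable {K L : Type*}

theorem continuous_tensKQ (Q : K → L → ℝ) : Continuous fun p => tensKQ p Q := by
  unfold tensKQ
  fun_prop

variable [Fintype K]

theorem tensKQ_mem_stdSimplex [Fintype L] {p : K → ℝ} {Q : K → L → ℝ} (hp : p ∈ stdSimplex ℝ K)
    (hQ : ∀ k, Q k ∈ stdSimplex ℝ L) : tensKQ p Q ∈ stdSimplex ℝ (K × L) := by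
  refine ⟨fun kl => mul_nonneg (hp.1 _) ((hQ _).1 _), ?_⟩
  calc ∑ kl, tensKQ p Q kl = ∑ k, p k * ∑ l, Q k l := by
        simp only [Fintype.sum_prod_type, tensKQ, Finset.mul_sum]
    _ = 1 := by simp only [(hQ _).2, mul_one, hp.2]

variable [DecidableEq K]

/-- The coordinates `k ↦ ξ (e k)` of a functional `ξ` on `ℝ^K` in the standard basis `e`,
identifying the dual of `ℝ^K` with `ℝ^K`. -/
noncomputable def dualCoords (K : Type*) [Fintype K] [DecidableEq K] :
    StrongDual ℝ (K → ℝ) ≃L[ℝ] (K → ℝ) :=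
  ContinuousLinearEquiv.piRing K

/-- The simplex `Δ(K)` as a set of functionals: those whose coordinates form a probability
vector. -/
def dualStdSimplex (K : Type*) [Fintype K] [DecidableEq K] : Set (StrongDual ℝ (K → ℝ)) :=
  dualCoords K ⁻¹' stdSimplex ℝ K

theorem isCompact_dualStdSimplex : IsCompact (dualStdSimplex K) :=
  (dualCoords K).toHomeomorph.isCompact_preimage.mpr (isCompact_stdSimplex ℝ K)

theorem dualStdSimplex_nonempty [Nonempty K] : (dualStdSimplex K).Nonempty :=
  .preimage ⟨_, single_mem_stdSimplex ℝ (Classical.arbitrary K)⟩ (dualCoords K).surjective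

/-- The function `ξ ↦ W(p ⊗ Q)`, where `p` is the coordinate vector of the functional `ξ`; for
`W = u` this is `u_K(·, Q)`. -/
noncomputable def dualSlice (W : (K × L → ℝ) → ℝ) (Q : K → L → ℝ) (ξ : StrongDual ℝ (K → ℝ)) : ℝ :=
  W (tensKQ (dualCoords K ξ) Q)

theorem continuousOn_dualSlice [Fintype L] {W : (K × L → ℝ) → ℝ} {Q : K → L → ℝ}
    (hW : ContinuousOn W (stdSimplex ℝ (K × L))) (hQ : ∀ k, Q k ∈ stdSimplex ℝ L) :
    ContinuousOn (dualSlice W Q) (dualStdSimplex K) :=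
  hW.comp ((continuous_tensKQ Q).comp (dualCoords K).continuous).continuousOn
    fun _ hξ => tensKQ_mem_stdSimplex hξ hQ

theorem sum_dualCoords_mul (ξ : StrongDual ℝ (K → ℝ)) (ζ : K → ℝ) :
    ∑ k, dualCoords K ξ k * ζ k = ξ ζ :=
  calc ∑ k, dualCoords K ξ k * ζ k = ∑ k, ζ k • ξ (Pi.single k 1) :=
        Finset.sum_congr rfl fun k _ => mul_comm _ _
    _ = ξ (∑ k, ζ k • Pi.single k 1) := by simp only [map_sum, map_smul]
    _ = ξ ζ := by rw [← pi_eq_sum_univ' ζ]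

theorem WsharpK_eq_conjugateOn (W : (K × L → ℝ) → ℝ) (Q : K → L → ℝ) :
    (fun ζ => WsharpK W ζ Q) = conjugateOn (dualStdSimplex K) (dualSlice W Q) := by
  ext ζ
  have himage : dualCoords K '' dualStdSimplex K = stdSimplex ℝ K :=
    Set.image_preimage_eq _ (dualCoords K).surjective
  rw [WsharpK, conjugateOn, ← himage, Set.image_image]
  simp only [sum_dualCoords_mul, dualSlice]

end Simplex

theorem value_below_u_at_differentiability_points_general
    {K L : Type*} [Fintype K] [Fintype L] [Nonempty K] [DecidableEq K]
    {u W : (K × L → ℝ) → ℝ} {Q₀ : K → L → ℝ} {ζ₀ : K → ℝ}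
    (hu : ContinuousOn u (stdSimplex ℝ (K × L))) (hW : ContinuousOn W (stdSimplex ℝ (K × L)))
    (hQ₀ : ∀ k, Q₀ k ∈ stdSimplex ℝ L)
    (hsub : ∀ φ : (K → ℝ) → ℝ, ContDiff ℝ 1 φ →
      ∀ ζ : K → ℝ, IsLocalMax (fun z => WsharpK W z Q₀ - φ z) ζ →
        -(WsharpK W ζ Q₀) + fderiv ℝ φ ζ ζ
          + u (tensKQ (fun k => -(fderiv ℝ φ ζ (Pi.single k 1))) Q₀) ≥ 0)
    (hdiff : DifferentiableAt ℝ (fun ζ => WsharpK W ζ Q₀) ζ₀) :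
    (fun k => -(fderiv ℝ (fun ζ => WsharpK W ζ Q₀) ζ₀ (Pi.single k 1))) ∈ stdSimplex ℝ K ∧
    W (tensKQ (fun k => -(fderiv ℝ (fun ζ => WsharpK W ζ Q₀) ζ₀ (Pi.single k 1))) Q₀)
      ≤ u (tensKQ (fun k => -(fderiv ℝ (fun ζ => WsharpK W ζ Q₀) ζ₀ (Pi.single k 1))) Q₀) := by
  have hconj := WsharpK_eq_conjugateOn W Q₀
  -- The coordinates of `-Dφ(ζ)` are definitionally `fun k => -(Dφ(ζ) (Pi.single k 1))`.
  have hvisc : IsViscositySubsolution (dualSlice u Q₀) (fun ζ => WsharpK W ζ Q₀) := hsub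
  rw [hconj] at hvisc hdiff ⊢
  exact hvisc.neg_fderiv_conjugateOn_mem isCompact_dualStdSimplex dualStdSimplex_nonempty
    (continuousOn_dualSlice hW hQ₀) (continuousOn_dualSlice hu hQ₀) hdiff

/-- If `W` is Lipschitz, `K`-concave, and for every `Q` the map `ζ ↦ W_K^♯(ζ,Q)` is a
viscosity sub-solution of `−w(ζ) + ⟨Dw(ζ),ζ⟩ + u_K(−Dw(ζ),Q) ≥ 0` on `ℝ^K`, then at
any point `ζ₀` of differentiability of `ζ ↦ W_K^♯(ζ,Q₀)` one has
`p₀ := −∇_ζ W_K^♯(ζ₀,Q₀) ∈ Δ(K)` and `W(p₀⊗Q₀) ≤ u(p₀⊗Q₀)`. -/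
theorem value_below_u_at_differentiability_points
    {K L : Type*} [Fintype K] [Fintype L] [Nonempty K] [Nonempty L] [DecidableEq K]
    (u : ((K × L) → ℝ) → ℝ) (hu : ContinuousOn u (stdSimplex ℝ (K × L)))
    (W : ((K × L) → ℝ) → ℝ)
    (hWlip : ∃ C : NNReal, LipschitzOnWith C W (stdSimplex ℝ (K × L)))
    (hWconc : ∀ Q : K → L → ℝ, (∀ k, Q k ∈ stdSimplex ℝ L) →
      ConcaveOn ℝ (stdSimplex ℝ K) (fun p => W (tensKQ p Q)))
    (hsub : ∀ Q : K → L → ℝ, (∀ k, Q k ∈ stdSimplex ℝ L) →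
      ∀ φ : (K → ℝ) → ℝ, ContDiff ℝ 1 φ →
      ∀ ζ : K → ℝ, IsLocalMax (fun z => WsharpK W z Q - φ z) ζ →
        -(WsharpK W ζ Q) + fderiv ℝ φ ζ ζ
          + u (tensKQ (fun k => -(fderiv ℝ φ ζ (Pi.single k 1))) Q) ≥ 0)
    (Q₀ : K → L → ℝ) (hQ₀ : ∀ k, Q₀ k ∈ stdSimplex ℝ L)
    (ζ₀ : K → ℝ) (hdiff : DifferentiableAt ℝ (fun ζ => WsharpK W ζ Q₀) ζ₀) :
    (fun k => -(fderiv ℝ (fun ζ => WsharpK W ζ Q₀) ζ₀ (Pi.single k 1))) ∈ stdSimplex ℝ K ∧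
    W (tensKQ (fun k => -(fderiv ℝ (fun ζ => WsharpK W ζ Q₀) ζ₀ (Pi.single k 1))) Q₀)
      ≤ u (tensKQ (fun k => -(fderiv ℝ (fun ζ => WsharpK W ζ Q₀) ζ₀ (Pi.single k 1))) Q₀) := by
  obtain ⟨C, hC⟩ := hWlip
  exact value_below_u_at_differentiability_points_general hu hC.continuousOn hQ₀ (hsub Q₀ hQ₀) hdiff
end
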